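/- arXiv:1002.1383 — 10 statements merged into one kernel-verified Lean document; each statement's English description precedes it below -/
import Mathlib

section
/- For all natural numbers n and k with n ≥ k, the least common multiple lcm(1, 2, …, k) divides the least common multiple lcm(n, n−1, …, n−k+1) of the k consecutive integers ending at n; equivalently, the lcm-binomial number [n, k] := lcm(n, n−1, …, n−k+1) / lcm(1, 2, …, k) is a positive integer. -/
/-- `rangeLcm a b` is `lcm(a, a+1, …, b)`, with the convention that the
lcm of an empty range equals `1`. -/
def rangeLcm (a b : ℕ) : ℕ := (Finset.Icc a b).lcm id

/-- The lcm-binomial number `[n, k] = lcm(n, n-1, …, n-k+1) / lcm(1, 2, …, k)`. -/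
def lcmBinom (n k : ℕ) : ℕ := rangeLcm (n - k + 1) n / rangeLcm 1 k

theorem dvd_rangeLcm {a b m : ℕ} (hm : m ∈ Finset.Icc a b) : m ∣ rangeLcm a b :=
  Finset.dvd_lcm (f := id) hm

theorem rangeLcm_dvd_iff {a b d : ℕ} : rangeLcm a b ∣ d ↔ ∀ m ∈ Finset.Icc a b, m ∣ d :=
  Finset.lcm_dvd_iff

theorem rangeLcm_pos {a b : ℕ} (ha : 0 < a) : 0 < rangeLcm a b :=
  Nat.pos_of_ne_zero <| Finset.lcm_ne_zero_iff.mpr fun _ hm ↦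
    (ha.trans_le (Finset.mem_Icc.mp hm).1).ne'

theorem exists_mem_Icc_dvd {a b m : ℕ} (hm : 0 < m) (h : a + m ≤ b + 1) :
    ∃ c ∈ Finset.Icc a b, m ∣ c := by
  have hlower : a ≤ m * (b / m) := by
    have hlt : b < m * (b / m) + m := by
      simpa only [Nat.mul_add_one] using Nat.lt_mul_div_succ b hm
    omega
  have hupper : m * (b / m) ≤ b := Nat.mul_div_le b m
  exact ⟨m * (b / m), Finset.mem_Icc.mpr ⟨hlower, hupper⟩, Nat.dvd_mul_right m _⟩

theorem rangeLcm_one_dvd_rangeLcm {a b k : ℕ} (h : a + k ≤ b + 1) :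
    rangeLcm 1 k ∣ rangeLcm a b := by
  refine rangeLcm_dvd_iff.mpr fun m hm ↦ ?_
  obtain ⟨hm_pos, hmk⟩ := Finset.mem_Icc.mp hm
  obtain ⟨c, hc, hmc⟩ : ∃ c ∈ Finset.Icc a b, m ∣ c := exists_mem_Icc_dvd hm_pos (by omega)
  exact hmc.trans (dvd_rangeLcm hc)

/-- For all natural numbers `n ≥ k`, `lcm(1, …, k)` divides
`lcm(n, n-1, …, n-k+1)`; equivalently, `[n, k]` is a positive integer. -/
theorem rangeLcm_one_dvd_rangeLcm_top (n k : ℕ) (h : k ≤ n) :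
    rangeLcm 1 k ∣ rangeLcm (n - k + 1) n ∧ 0 < lcmBinom n k := by
  have hdvd : rangeLcm 1 k ∣ rangeLcm (n - k + 1) n := rangeLcm_one_dvd_rangeLcm (by omega)
  have hpos : 0 < rangeLcm (n - k + 1) n := rangeLcm_pos (Nat.succ_pos _)
  exact ⟨hdvd, Nat.div_pos (Nat.le_of_dvd hpos hdvd) (Nat.pos_of_dvd_of_pos hdvd hpos)⟩
end

section
/- For every natural number k ≥ 0 and every positive integer n, the integer g_k(1) divides the integer g_k(n), where g_k(n) := n(n+1)⋯(n+k) / lcm(n, n+1, …, n+k). Note that g_k(1) = (k+1)! / lcm(1, 2, …, k+1). -/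
/-- Farhi's arithmetic function `g_k(n) = n(n+1)⋯(n+k) / lcm(n, n+1, …, n+k)`. -/
def farhiG (k n : ℕ) : ℕ := (∏ i ∈ Finset.Icc n (n + k), i) / rangeLcm n (n + k)

/-!
The exponent of a prime `p` in a product of positive integers is the sum over `i ≥ 1` of the number
of factors divisible by `p ^ i`; its exponent in their least common multiple is the number of
`i ≥ 1` for which there is such a factor. In the quotient, each of these numbers is thus lowered by
one where it is positive, so the exponent of `p` is monotone in them. Finally, `k + 1` consecutive
integers contain at least `⌊(k + 1) / p ^ i⌋` multiples of `p ^ i`, with equality for `1, …, k + 1`.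
-/

open Finset

section Factorization

variable {ι : Type*} {s : Finset ι} {f : ι → ℕ} {p : ℕ}

theorem prime_pow_dvd_finset_lcm_iff (hp : p.Prime) {i : ℕ} (hi : 0 < i) :
    p ^ i ∣ s.lcm f ↔ ∃ x ∈ s, p ^ i ∣ f x := by
  by_cases hf : ∀ x ∈ s, f x ≠ 0
  · rw [hp.pow_dvd_iff_le_factorization (lcm_ne_zero_iff.2 hf), factorization_lcm hf,
      Finset.le_sup_iff hi]
    exact exists_congr fun x ↦ and_congr_right fun hx ↦
      (hp.pow_dvd_iff_le_factorization (hf x hx)).symm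
  · push Not at hf
    obtain ⟨x, hx, hx0⟩ := hf
    have hlcm : s.lcm f = 0 := lcm_eq_zero_iff.2 ⟨x, hx, hx0⟩
    exact iff_of_true (hlcm ▸ dvd_zero _) ⟨x, hx, hx0 ▸ dvd_zero _⟩

theorem factorization_finset_prod_eq_sum_card (hp : p.Prime) {b : ℕ} (hf : ∀ x ∈ s, 0 < f x)
    (hb : ∀ x ∈ s, f x < p ^ b) :
    (∏ x ∈ s, f x).factorization p = ∑ i ∈ Ico 1 b, #{x ∈ s | p ^ i ∣ f x} :=
  calc (∏ x ∈ s, f x).factorization p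
    _ = ∑ x ∈ s, (f x).factorization p :=
        Nat.factorization_prod_apply fun x hx ↦ (hf x hx).ne'
    _ = ∑ x ∈ s, #{i ∈ Ico 1 b | p ^ i ∣ f x} := sum_congr rfl fun x hx ↦
        Nat.factorization_eq_card_pow_dvd_of_lt hp (hf x hx) (hb x hx)
    _ = ∑ i ∈ Ico 1 b, #{x ∈ s | p ^ i ∣ f x} :=
        sum_card_bipartiteAbove_eq_sum_card_bipartiteBelow fun x i ↦ p ^ i ∣ f x

theorem factorization_finset_lcm_eq_sum_min_card (hp : p.Prime) {b : ℕ} (hpos : 0 < s.lcm f)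
    (hb : s.lcm f < p ^ b) :
    (s.lcm f).factorization p = ∑ i ∈ Ico 1 b, min 1 #{x ∈ s | p ^ i ∣ f x} := by
  rw [Nat.factorization_eq_card_pow_dvd_of_lt hp hpos hb, card_filter]
  refine sum_congr rfl fun i hi ↦ ?_
  have hdvd : p ^ i ∣ s.lcm f ↔ 0 < #{x ∈ s | p ^ i ∣ f x} := by
    rw [prime_pow_dvd_finset_lcm_iff hp (mem_Ico.1 hi).1, card_pos, filter_nonempty_iff]
  split_ifs with h <;> rw [hdvd] at h <;> omega

end Factorization

section ProdDivLcm

variable {ι κ : Type*} {s : Finset ι} {f : ι → ℕ} {t : Finset κ} {g : κ → ℕ}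

/-- The product of a finite family of natural numbers divided by its least common multiple. Farhi's
`g_k(n)` is the case of the family `n, n + 1, …, n + k`. The division is exact; the value is `0`
if the family contains `0`. -/
def prodDivLcm (s : Finset ι) (f : ι → ℕ) : ℕ := (∏ x ∈ s, f x) / s.lcm f

theorem prodDivLcm_pos (hf : ∀ x ∈ s, 0 < f x) : 0 < prodDivLcm s f :=
  Nat.div_pos (Nat.le_of_dvd (prod_pos hf) (s.lcm_dvd_prod f))
    (Nat.pos_of_dvd_of_pos (s.lcm_dvd_prod f) (prod_pos hf))

theorem factorization_prodDivLcm {p b : ℕ} (hp : p.Prime) (hf : ∀ x ∈ s, 0 < f x)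
    (hb : s.lcm f < p ^ b) :
    (prodDivLcm s f).factorization p = ∑ i ∈ Ico 1 b, (#{x ∈ s | p ^ i ∣ f x} - 1) := by
  have hpos : 0 < s.lcm f := Nat.pos_of_dvd_of_pos (s.lcm_dvd_prod f) (prod_pos hf)
  have hlt : ∀ x ∈ s, f x < p ^ b := fun x hx ↦ (Nat.le_of_dvd hpos (dvd_lcm hx)).trans_lt hb
  rw [prodDivLcm, Nat.factorization_div (s.lcm_dvd_prod f), Finsupp.tsub_apply,
    factorization_finset_prod_eq_sum_card hp hf hlt,
    factorization_finset_lcm_eq_sum_min_card hp hpos hb,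
    ← sum_tsub_distrib _ fun _ _ ↦ min_le_right _ _]
  exact sum_congr rfl fun i _ ↦ by omega

theorem prodDivLcm_dvd_prodDivLcm_of_card_le (hf : ∀ x ∈ s, 0 < f x) (hg : ∀ y ∈ t, 0 < g y)
    (hcard : ∀ p i, p.Prime → 0 < i → #{x ∈ s | p ^ i ∣ f x} ≤ #{y ∈ t | p ^ i ∣ g y}) :
    prodDivLcm s f ∣ prodDivLcm t g := by
  rw [← Nat.factorization_prime_le_iff_dvd (prodDivLcm_pos hf).ne' (prodDivLcm_pos hg).ne']
  intro p hp
  obtain ⟨b, hsb, htb⟩ : ∃ b, s.lcm f < p ^ b ∧ t.lcm g < p ^ b :=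
    ⟨max (s.lcm f) (t.lcm g), max_lt_iff.1 (Nat.lt_pow_self hp.one_lt)⟩
  rw [factorization_prodDivLcm hp hf hsb, factorization_prodDivLcm hp hg htb]
  exact sum_le_sum fun i hi ↦ Nat.sub_le_sub_right (hcard p i hp (mem_Ico.1 hi).1) 1

end ProdDivLcm

theorem card_filter_dvd_Ioc (a b q : ℕ) : #{x ∈ Ioc a b | q ∣ x} = b / q - a / q := by
  rcases le_total a b with hab | hba
  · have hsub : {x ∈ Ioc 0 a | q ∣ x} ⊆ {x ∈ Ioc 0 b | q ∣ x} :=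
      filter_subset_filter _ (Ioc_subset_Ioc_right hab)
    have hsdiff : {x ∈ Ioc a b | q ∣ x} = {x ∈ Ioc 0 b | q ∣ x} \ {x ∈ Ioc 0 a | q ∣ x} := by
      grind
    rw [hsdiff, card_sdiff_of_subset hsub, Nat.Ioc_filter_dvd_card_eq_div,
      Nat.Ioc_filter_dvd_card_eq_div]
  · rw [Ioc_eq_empty_of_le hba, filter_empty, card_empty,
      Nat.sub_eq_zero_of_le (Nat.div_le_div_right hba)]

theorem card_filter_dvd_Ioc_zero_le (l a q : ℕ) :
    #{x ∈ Ioc 0 l | q ∣ x} ≤ #{x ∈ Ioc a (a + l) | q ∣ x} := by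
  rw [card_filter_dvd_Ioc, card_filter_dvd_Ioc, Nat.zero_div, Nat.sub_zero]
  exact Nat.le_sub_of_add_le' Nat.div_add_div_le_add_div

theorem farhiG_add_one_eq_prodDivLcm (k a : ℕ) :
    farhiG k (a + 1) = prodDivLcm (Ioc a (a + (k + 1))) id := by
  rw [← Icc_add_one_left_eq_Ioc, ← add_assoc, add_right_comm]
  rfl

/-- For every `k` and every positive integer `n`, `g_k(1)` divides `g_k(n)`. -/
theorem farhiG_one_dvd_farhiG (k n : ℕ) (hn : 1 ≤ n) :
    farhiG k 1 ∣ farhiG k n := by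
  obtain ⟨a, rfl⟩ := Nat.exists_eq_add_of_le' hn
  have hone : farhiG k 1 = prodDivLcm (Ioc 0 (k + 1)) id := by
    simpa using farhiG_add_one_eq_prodDivLcm k 0
  have hpos : ∀ b c, ∀ x ∈ Ioc b c, 0 < id x := fun _ _ _ hx ↦ Nat.zero_lt_of_lt (mem_Ioc.1 hx).1
  rw [hone, farhiG_add_one_eq_prodDivLcm]
  exact prodDivLcm_dvd_prodDivLcm_of_card_le (hpos _ _) (hpos _ _) fun p i _ _ ↦
    card_filter_dvd_Ioc_zero_le (k + 1) a (p ^ i)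
end

section
/- For every natural number k ≥ 1, the sequence n ↦ C(n, k) / [n, k] (defined for n ≥ k) of positive integers is periodic, and its smallest period is T_k = ∏_{p prime, p < k} p^{α_p}, where α_p = 0 if v_p(k) ≥ max_{1 ≤ i < k} v_p(i), and α_p = max_{1 ≤ i < k} v_p(i) otherwise (v_p denoting the p-adic valuation). -/
/-!
The quotient `C(n + k, k) / [n + k, k]` is `g n / g 0`, where `g n` is the product of
`n + 1, …, n + k` divided by their lcm (Farhi's function), so it has the same periods as `g`.

Fix a prime `p`, let `M` be the largest exponent with `p ^ M < k`, and let `c q n` be the number of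
multiples of `q` in `(n, n + k]`. Counting multiples of powers of `p` gives
`v_p (g n) = ∑_{1 ≤ e ≤ M} (c (p ^ e) n - 1)`. If `p ^ M ∣ k`, every summand is constant; in any
case `p ^ M` is a period. Conversely, with `ν x = min (v_p x) M`, sliding the window gives
`v_p (g (n + 1)) + ν (n + 1) = v_p (g n) + ν (n + k + 1)`. Comparing `n + 1 = p ^ M` with
`n + 1 = p ^ M + t` for a period `t` yields `M + ν (t + k) = ν t + ν k`, which the ultrametric
inequality forbids unless `p ^ M` divides `t` or `k`.
-/

section Periods

open Finset

section ProdDivLcm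

variable {ι : Type*} {s : Finset ι} {f : ι → ℕ} {p b : ℕ}

theorem pow_dvd_finset_lcm_iff (hf : ∀ i ∈ s, f i ≠ 0) (hp : p.Prime) {e : ℕ} (he : e ≠ 0) :
    p ^ e ∣ s.lcm f ↔ ∃ i ∈ s, p ^ e ∣ f i := by
  have hlcm : s.lcm f ≠ 0 := by simpa [Finset.lcm_eq_zero_iff] using hf
  rw [hp.pow_dvd_iff_le_factorization hlcm, factorization_lcm hf,
    Finset.le_sup_iff (Nat.pos_of_ne_zero he)]
  exact exists_congr fun i => and_congr_right fun hi =>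
    (hp.pow_dvd_iff_le_factorization (hf i hi)).symm

theorem factorization_prod_eq_sum_card_pow_dvd (hf : ∀ i ∈ s, f i ≠ 0) (hp : p.Prime)
    (hb : ∀ i ∈ s, f i < p ^ b) :
    (∏ i ∈ s, f i).factorization p = ∑ e ∈ Ico 1 b, #{i ∈ s | p ^ e ∣ f i} := by
  rw [Nat.factorization_prod_apply hf, sum_congr rfl fun i hi =>
    Nat.factorization_eq_card_pow_dvd_of_lt hp (Nat.pos_of_ne_zero (hf i hi)) (hb i hi)]
  exact sum_card_bipartiteAbove_eq_sum_card_bipartiteBelow fun i e => p ^ e ∣ f i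

theorem factorization_lcm_eq_sum_min_card_pow_dvd (hf : ∀ i ∈ s, f i ≠ 0) (hp : p.Prime)
    (hb : s.lcm f < p ^ b) :
    (s.lcm f).factorization p = ∑ e ∈ Ico 1 b, min #{i ∈ s | p ^ e ∣ f i} 1 := by
  have hlcm : s.lcm f ≠ 0 := by simpa [Finset.lcm_eq_zero_iff] using hf
  rw [Nat.factorization_eq_card_pow_dvd_of_lt hp (Nat.pos_of_ne_zero hlcm) hb, card_filter]
  refine sum_congr rfl fun e he => ?_
  have he0 : e ≠ 0 := by grind
  simp only [pow_dvd_finset_lcm_iff hf hp he0, ← filter_nonempty_iff, ← card_pos]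
  split_ifs <;> omega

theorem factorization_prod_div_lcm (hf : ∀ i ∈ s, f i ≠ 0) (hp : p.Prime) {M : ℕ}
    (hM : ∀ e, M < e → #{i ∈ s | p ^ e ∣ f i} ≤ 1) :
    ((∏ i ∈ s, f i) / s.lcm f).factorization p =
      ∑ e ∈ Icc 1 M, (#{i ∈ s | p ^ e ∣ f i} - 1) := by
  have hprod : 0 < ∏ i ∈ s, f i := prod_pos fun i hi => Nat.pos_of_ne_zero (hf i hi)
  obtain ⟨b, hMb, hb⟩ : ∃ b, M < b ∧ ∏ i ∈ s, f i < p ^ b :=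
    ⟨M + 1 + ∏ i ∈ s, f i, by omega,
      (Nat.lt_pow_self hp.one_lt).trans_le (Nat.pow_le_pow_right hp.pos (by omega))⟩
  have hfb : ∀ i ∈ s, f i < p ^ b := fun i hi =>
    (Nat.le_of_dvd hprod (dvd_prod_of_mem f hi)).trans_lt hb
  have hlcmb : s.lcm f < p ^ b := (Nat.le_of_dvd hprod (lcm_dvd_prod s f)).trans_lt hb
  have hcut : ∑ e ∈ Icc 1 M, (#{i ∈ s | p ^ e ∣ f i} - 1) =
      ∑ e ∈ Ico 1 b, (#{i ∈ s | p ^ e ∣ f i} - 1) := by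
    refine sum_subset (by grind) fun e _ he => ?_
    have := hM e (by grind)
    omega
  rw [Nat.factorization_div (lcm_dvd_prod s f), Finsupp.tsub_apply,
    factorization_prod_eq_sum_card_pow_dvd hf hp hfb,
    factorization_lcm_eq_sum_min_card_pow_dvd hf hp hlcmb, hcut]
  refine Nat.sub_eq_of_eq_add ?_
  rw [← sum_add_distrib]
  exact sum_congr rfl fun e _ => by omega

end ProdDivLcm

section WindowCount

/-- The number of multiples of `q` among the `k` consecutive integers `n + 1, …, n + k`. -/
def windowCount (k q n : ℕ) : ℕ := #{i ∈ Ioc n (n + k) | q ∣ i}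

variable {k q : ℕ}

theorem windowCount_add_div (k q n : ℕ) : windowCount k q n + n / q = (n + k) / q := by
  rw [windowCount, ← Nat.Ioc_filter_dvd_card_eq_div n, ← Nat.Ioc_filter_dvd_card_eq_div (n + k),
    ← Ioc_union_Ioc_eq_Ioc n.zero_le (n.le_add_right k), filter_union, add_comm,
    card_union_of_disjoint (disjoint_filter_filter (Ioc_disjoint_Ioc_of_le le_rfl))]

theorem windowCount_zero_right (k q : ℕ) : windowCount k q 0 = k / q := by
  simpa using windowCount_add_div k q 0

theorem div_le_windowCount (k q n : ℕ) : k / q ≤ windowCount k q n := by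
  have hadd : n / q + k / q ≤ (n + k) / q := Nat.div_add_div_le_add_div
  have := windowCount_add_div k q n
  omega

theorem windowCount_pos (hq : 0 < q) (hqk : q ≤ k) (n : ℕ) : 0 < windowCount k q n :=
  (Nat.div_pos hqk hq).trans_le (div_le_windowCount k q n)

theorem windowCount_le_one (hq : 0 < q) (hkq : k ≤ q) (n : ℕ) : windowCount k q n ≤ 1 := by
  have hle : (n + k) / q ≤ n / q + 1 := by
    rw [← Nat.add_div_right n hq]
    gcongr
  have := windowCount_add_div k q n
  omega

theorem windowCount_succ_add (k q n : ℕ) :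
    windowCount k q (n + 1) + (if q ∣ n + 1 then 1 else 0) =
      windowCount k q n + (if q ∣ n + k + 1 then 1 else 0) := by
  have h := windowCount_add_div k q n
  have h' := windowCount_add_div k q (n + 1)
  rw [add_right_comm n 1 k, Nat.succ_div, Nat.succ_div] at h'
  omega

theorem windowCount_periodic_of_dvd {t : ℕ} (hqt : q ∣ t) :
    Function.Periodic (windowCount k q) t := by
  intro n
  have h := windowCount_add_div k q n
  have h' := windowCount_add_div k q (n + t)
  rw [add_right_comm n t k, Nat.add_div_of_dvd_left hqt, Nat.add_div_of_dvd_left hqt] at h'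
  omega

theorem windowCount_eq_div_of_dvd (hqk : q ∣ k) (n : ℕ) : windowCount k q n = k / q := by
  have h := windowCount_add_div k q n
  rw [Nat.add_div_of_dvd_left hqk] at h
  omega

end WindowCount

section CappedValuation

/-- The `p`-adic valuation of `x` capped at `M`, that is `min (v_p x) M`. Counting exponents makes
it equal to `M` at `x = 0`, where `Nat.factorization` is `0`. -/
def cappedValuation (p M x : ℕ) : ℕ := #{e ∈ Icc 1 M | p ^ e ∣ x}

variable {p M : ℕ}

theorem cappedValuation_of_pow_dvd {x : ℕ} (h : p ^ M ∣ x) : cappedValuation p M x = M := by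
  rw [cappedValuation, filter_true_of_mem fun e he => (pow_dvd_pow p (mem_Icc.1 he).2).trans h,
    Nat.card_Icc, Nat.add_sub_cancel]

theorem cappedValuation_add_of_pow_dvd {x : ℕ} (h : p ^ M ∣ x) (y : ℕ) :
    cappedValuation p M (x + y) = cappedValuation p M y := by
  refine congrArg card (filter_congr fun e he => ?_)
  exact Nat.dvd_add_right ((pow_dvd_pow p (mem_Icc.1 he).2).trans h)

theorem cappedValuation_add_lt (hM : M ≠ 0) {x y : ℕ} (hx : ¬p ^ M ∣ x) (hy : ¬p ^ M ∣ y) :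
    cappedValuation p M x + cappedValuation p M y < M + cappedValuation p M (x + y) := by
  -- The union of the two sets of exponents misses `M`; their intersection consists of exponents
  -- counted for `x + y`.
  rw [cappedValuation, cappedValuation, ← card_union_add_card_inter, ← filter_or, ← filter_and]
  refine add_lt_add_of_lt_of_le ?_ (card_le_card ?_)
  · have hMem : M ∈ Icc 1 M := mem_Icc.2 ⟨Nat.pos_of_ne_zero hM, le_rfl⟩
    simpa using card_lt_card (filter_ssubset.2 ⟨M, hMem, not_or.2 ⟨hx, hy⟩⟩)
  · exact monotone_filter_right _ fun e _ h => dvd_add h.1 h.2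

end CappedValuation

section Farhi

/-- Farhi's function: the product of the `k` consecutive integers `n + 1, …, n + k` divided by their
least common multiple. In Farhi's notation this is `g_{k-1} (n + 1)`. -/
def farhi (k n : ℕ) : ℕ := (∏ i ∈ Ioc n (n + k), i) / (Ioc n (n + k)).lcm id

theorem farhi_mul_lcm (k n : ℕ) :
    farhi k n * (Ioc n (n + k)).lcm id = ∏ i ∈ Ioc n (n + k), i :=
  Nat.div_mul_cancel (lcm_dvd_prod _ id)

theorem farhi_ne_zero (k n : ℕ) : farhi k n ≠ 0 := by
  have hprod : ∏ i ∈ Ioc n (n + k), i ≠ 0 := prod_ne_zero_iff.2 (by grind)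
  exact left_ne_zero_of_mul ((farhi_mul_lcm k n).trans_ne hprod)

/-- The largest `p`-adic valuation of a positive integer less than `k`. -/
def maxFactorization (k p : ℕ) : ℕ := (Icc 1 (k - 1)).sup fun i => i.factorization p

variable {k p t : ℕ}

theorem le_maxFactorization_iff (hp : p.Prime) {e : ℕ} (he : e ≠ 0) :
    e ≤ maxFactorization k p ↔ p ^ e < k := by
  rw [maxFactorization, Finset.le_sup_iff (Nat.pos_of_ne_zero he)]
  constructor
  · rintro ⟨i, hi, hei⟩
    rw [mem_Icc] at hi
    have : p ^ e ≤ i :=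
      Nat.le_of_dvd hi.1 ((hp.pow_dvd_iff_le_factorization (by omega)).2 hei)
    omega
  · intro h
    have := Nat.pow_pos (n := e) hp.pos
    exact ⟨p ^ e, mem_Icc.2 (by omega), (Nat.factorization_pow_self hp).ge⟩

theorem maxFactorization_eq_zero (hp : p.Prime) (hkp : k ≤ p) : maxFactorization k p = 0 := by
  have := (le_maxFactorization_iff (k := k) hp one_ne_zero).not
  rw [pow_one] at this
  omega

theorem pow_maxFactorization_dvd_self_iff (hp : p.Prime) :
    p ^ maxFactorization k p ∣ k ↔ maxFactorization k p ≤ k.factorization p := by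
  rcases eq_or_ne k 0 with rfl | hk
  · simp [maxFactorization]
  · exact hp.pow_dvd_iff_le_factorization hk

theorem factorization_farhi (hp : p.Prime) (k n : ℕ) :
    (farhi k n).factorization p =
      ∑ e ∈ Icc 1 (maxFactorization k p), (windowCount k (p ^ e) n - 1) := by
  refine factorization_prod_div_lcm (f := id) (by grind) hp fun e he => ?_
  have hk : k ≤ p ^ e := not_lt.1 fun h => he.not_ge ((le_maxFactorization_iff hp (by omega)).2 h)
  exact windowCount_le_one (Nat.pow_pos hp.pos) hk n

theorem farhi_zero_dvd (k n : ℕ) : farhi k 0 ∣ farhi k n := by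
  rw [← Nat.factorization_prime_le_iff_dvd (farhi_ne_zero k 0) (farhi_ne_zero k n)]
  intro p hp
  rw [factorization_farhi hp, factorization_farhi hp]
  gcongr with e
  rw [windowCount_zero_right]
  exact div_le_windowCount k (p ^ e) n

theorem factorization_farhi_succ_add (hp : p.Prime) (k n : ℕ) :
    (farhi k (n + 1)).factorization p + cappedValuation p (maxFactorization k p) (n + 1) =
      (farhi k n).factorization p + cappedValuation p (maxFactorization k p) (n + k + 1) := by
  simp only [factorization_farhi hp, cappedValuation, card_filter, ← sum_add_distrib]
  refine sum_congr rfl fun e he => ?_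
  rw [mem_Icc] at he
  have hpos := windowCount_pos (Nat.pow_pos hp.pos)
    ((le_maxFactorization_iff (k := k) hp (e := e) (by omega)).1 he.2).le
  have := windowCount_succ_add k (p ^ e) n
  have := hpos n
  have := hpos (n + 1)
  omega

theorem farhi_periodic_iff_factorization :
    Function.Periodic (farhi k) t ↔
      ∀ p, p.Prime → Function.Periodic (fun n => (farhi k n).factorization p) t := by
  refine ⟨fun h p _ n => congrArg (Nat.factorization · p) (h n), fun h n => ?_⟩
  refine Nat.eq_of_factorization_eq (farhi_ne_zero k _) (farhi_ne_zero k n) fun p => ?_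
  by_cases hp : p.Prime
  · exact h p hp n
  · simp [Nat.factorization_eq_zero_of_not_prime _ hp]

theorem factorization_farhi_periodic (hp : p.Prime)
    (h : p ^ maxFactorization k p ∣ t ∨ p ^ maxFactorization k p ∣ k) :
    Function.Periodic (fun n => (farhi k n).factorization p) t := by
  intro n
  simp only [factorization_farhi hp]
  refine sum_congr rfl fun e he => ?_
  have hpow : p ^ e ∣ p ^ maxFactorization k p := pow_dvd_pow p (mem_Icc.1 he).2
  rcases h with ht | hk
  · rw [windowCount_periodic_of_dvd (hpow.trans ht) n]
  · rw [windowCount_eq_div_of_dvd (hpow.trans hk), windowCount_eq_div_of_dvd (hpow.trans hk)]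

theorem pow_maxFactorization_dvd_of_periodic (hp : p.Prime)
    (h : Function.Periodic (fun n => (farhi k n).factorization p) t) :
    p ^ maxFactorization k p ∣ t ∨ p ^ maxFactorization k p ∣ k := by
  by_contra! hdvd
  set M := maxFactorization k p
  set ν := cappedValuation p M
  have hper (m : ℕ) :
      (farhi k (m + t)).factorization p = (farhi k m).factorization p := h m
  have hM : M ≠ 0 := fun h0 => hdvd.1 (by simp [h0])
  obtain ⟨n, hn⟩ : ∃ n, p ^ M = n + 1 := Nat.exists_eq_add_one.2 (Nat.pow_pos hp.pos)
  have hwindow : (farhi k (n + 1)).factorization p + M = (farhi k n).factorization p + ν k := by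
    have := factorization_farhi_succ_add hp k n
    rwa [add_right_comm n k 1, ← hn, cappedValuation_of_pow_dvd dvd_rfl,
      cappedValuation_add_of_pow_dvd dvd_rfl, hn] at this
  have hshifted : (farhi k (n + 1)).factorization p + ν t =
      (farhi k n).factorization p + ν (t + k) := by
    have := factorization_farhi_succ_add hp k (n + t)
    rwa [hper n, add_right_comm n t 1, hper (n + 1), add_right_comm (n + t) k 1,
      add_right_comm n t 1, add_assoc (n + 1) t k, ← hn, cappedValuation_add_of_pow_dvd dvd_rfl,
      cappedValuation_add_of_pow_dvd dvd_rfl, hn] at this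
  have : ν t + ν k < M + ν (t + k) := cappedValuation_add_lt hM hdvd.1 hdvd.2
  omega

end Farhi

section PeriodOfFarhi

/-- The exponent `α_p` of `p` in the smallest period `T_k`. -/
def periodExponent (k p : ℕ) : ℕ :=
  if maxFactorization k p ≤ k.factorization p then 0 else maxFactorization k p

/-- The smallest period `T_k = ∏_{p < k} p ^ α_p` of `n ↦ C(n, k) / [n, k]`. -/
def lcmBinomPeriod (k : ℕ) : ℕ := ∏ p ∈ (range k).filter Nat.Prime, p ^ periodExponent k p

variable {k p t : ℕ}

theorem pow_periodExponent_dvd_iff (hp : p.Prime) :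
    p ^ periodExponent k p ∣ t ↔
      p ^ maxFactorization k p ∣ t ∨ p ^ maxFactorization k p ∣ k := by
  rw [periodExponent, pow_maxFactorization_dvd_self_iff hp]
  split_ifs with h <;> simp [h]

theorem lcmBinomPeriod_dvd_iff :
    lcmBinomPeriod k ∣ t ↔ ∀ p, p.Prime → p ^ periodExponent k p ∣ t := by
  constructor
  · intro h p hp
    rcases lt_or_ge p k with hpk | hkp
    · have hmem : p ∈ (range k).filter Nat.Prime := mem_filter.2 ⟨mem_range.2 hpk, hp⟩
      exact (dvd_prod_of_mem (fun p => p ^ periodExponent k p) hmem).trans h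
    · simp [periodExponent, maxFactorization_eq_zero hp hkp]
  · intro h
    refine prod_dvd_of_isRelPrime (fun p hp q hq hpq => ?_) fun p hp => h p (mem_filter.1 hp).2
    have hcoprime := (Nat.coprime_primes (mem_filter.1 hp).2 (mem_filter.1 hq).2).2 hpq
    exact Nat.coprime_iff_isRelPrime.1 (hcoprime.pow _ _)

theorem farhi_periodic_iff : Function.Periodic (farhi k) t ↔ lcmBinomPeriod k ∣ t := by
  rw [farhi_periodic_iff_factorization, lcmBinomPeriod_dvd_iff]
  refine forall₂_congr fun p hp => ?_
  rw [pow_periodExponent_dvd_iff hp]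
  exact ⟨pow_maxFactorization_dvd_of_periodic hp, factorization_farhi_periodic hp⟩

end PeriodOfFarhi

section LcmBinom

variable {k t : ℕ}

theorem prod_Ioc_add_eq_factorial_mul_choose (k n : ℕ) :
    ∏ i ∈ Ioc n (n + k), i = k.factorial * (n + k).choose k := by
  rw [← Nat.ascFactorial_eq_factorial_mul_choose, Nat.ascFactorial_eq_prod_range,
    ← Ico_add_one_add_one_eq_Ioc, prod_Ico_eq_prod_range]
  congr 2
  omega

theorem lcm_Ioc_zero_dvd_lcm_Ioc_add (k n : ℕ) : (Ioc 0 k).lcm id ∣ (Ioc n (n + k)).lcm id := by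
  refine Finset.lcm_dvd fun i hi => ?_
  obtain ⟨hi0, hik⟩ := mem_Ioc.1 hi
  obtain ⟨j, hj⟩ := card_pos.1 (windowCount_pos hi0 hik n)
  obtain ⟨hjmem, hij⟩ := mem_filter.1 hj
  exact hij.trans (dvd_lcm (f := id) hjmem)

theorem lcmBinom_mul_lcm (k n : ℕ) :
    lcmBinom (n + k) k * (Ioc 0 k).lcm id = (Ioc n (n + k)).lcm id := by
  rw [lcmBinom, rangeLcm, rangeLcm, Nat.add_sub_cancel, Icc_add_one_left_eq_Ioc,
    ← zero_add 1, Icc_add_one_left_eq_Ioc]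
  exact Nat.div_mul_cancel (lcm_Ioc_zero_dvd_lcm_Ioc_add k n)

theorem choose_div_lcmBinom_eq_farhi_div (k n : ℕ) :
    (n + k).choose k / lcmBinom (n + k) k = farhi k n / farhi k 0 := by
  set l := lcmBinom (n + k) k
  set L := (Ioc 0 k).lcm id
  have hfactorial : farhi k 0 * L = k.factorial := by
    simpa using (farhi_mul_lcm k 0).trans (prod_Ioc_add_eq_factorial_mul_choose k 0)
  have hchoose : farhi k n * (l * L) = k.factorial * (n + k).choose k := by
    rw [lcmBinom_mul_lcm, farhi_mul_lcm, prod_Ioc_add_eq_factorial_mul_choose]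
  have hlL : 0 < l * L := by
    refine Nat.pos_of_ne_zero (right_ne_zero_of_mul (a := farhi k n) ?_)
    rw [hchoose]
    exact mul_ne_zero k.factorial_ne_zero (Nat.choose_pos le_add_self).ne'
  calc (n + k).choose k / l
      = k.factorial * (n + k).choose k / (k.factorial * l) :=
        (Nat.mul_div_mul_left _ _ k.factorial_pos).symm
    _ = farhi k n * (l * L) / (farhi k 0 * (l * L)) := by
        rw [← hchoose, ← hfactorial, mul_assoc, mul_comm L l]
    _ = farhi k n / farhi k 0 := Nat.mul_div_mul_right _ _ hlL

theorem choose_div_lcmBinom_periodic_iff :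
    (∀ n, k ≤ n → (n + t).choose k / lcmBinom (n + t) k = n.choose k / lcmBinom n k) ↔
      lcmBinomPeriod k ∣ t := by
  rw [← farhi_periodic_iff]
  have hshift (n : ℕ) : (n + k + t).choose k / lcmBinom (n + k + t) k =
      (n + k).choose k / lcmBinom (n + k) k ↔ farhi k (n + t) = farhi k n := by
    rw [add_right_comm, choose_div_lcmBinom_eq_farhi_div, choose_div_lcmBinom_eq_farhi_div,
      Nat.div_left_inj (farhi_zero_dvd k _) (farhi_zero_dvd k n)]
  refine ⟨fun h n => (hshift n).1 (h _ le_add_self), fun h n hn => ?_⟩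
  obtain ⟨m, rfl⟩ := Nat.exists_eq_add_of_le' hn
  exact (hshift m).2 (h m)

end LcmBinom

end Periods

/-- For `k ≥ 1`, the sequence `n ↦ C(n, k) / [n, k]` (for `n ≥ k`) is
periodic and its smallest period is
`T_k = ∏_{p prime, p < k} p^{α_p}`, where `α_p = 0` if
`v_p(k) ≥ max_{1 ≤ i < k} v_p(i)` and `α_p = max_{1 ≤ i < k} v_p(i)` otherwise. -/
theorem choose_div_lcmBinom_periodic_smallest_period (k : ℕ) (hk : 1 ≤ k) :
    let α : ℕ → ℕ := fun p =>
      if (Finset.Icc 1 (k - 1)).sup (fun i => i.factorization p) ≤ k.factorization p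
        then 0 else (Finset.Icc 1 (k - 1)).sup (fun i => i.factorization p)
    let T : ℕ := ∏ p ∈ (Finset.range k).filter Nat.Prime, p ^ α p
    0 < T ∧ (∀ n, k ≤ n → (n + T).choose k / lcmBinom (n + T) k = n.choose k / lcmBinom n k) ∧
      ∀ T' : ℕ, 0 < T' →
        (∀ n, k ≤ n → (n + T').choose k / lcmBinom (n + T') k = n.choose k / lcmBinom n k) →
        T ≤ T' := by
  intro α T
  have hT : 0 < T := Finset.prod_pos fun p hp => Nat.pow_pos (Finset.mem_filter.1 hp).2.pos
  have periodic_iff (t : ℕ) : (∀ n, k ≤ n →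
      (n + t).choose k / lcmBinom (n + t) k = n.choose k / lcmBinom n k) ↔ T ∣ t :=
    choose_div_lcmBinom_periodic_iff
  exact ⟨hT, (periodic_iff T).2 dvd_rfl, fun T' hT' h => Nat.le_of_dvd hT' ((periodic_iff T').1 h)⟩
end

section
/- For every natural number k ≥ 1, the function g_k(n) := n(n+1)⋯(n+k) / lcm(n, n+1, …, n+k) on positive integers is periodic, and its smallest period is P_k = ∏_{p prime, p ≤ k} p^{β_p}, where β_p = 0 if v_p(k+1) ≥ max_{1 ≤ i ≤ k} v_p(i), and β_p = max_{1 ≤ i ≤ k} v_p(i) otherwise (v_p denoting the p-adic valuation). -/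
/-!
Fix a prime `p` and let `e = ⌊log_p k⌋`. Among `n, …, n + k` some member is divisible by `p ^ e`,
while two members are never both divisible by `p ^ (e + 1)`. Dividing by the lcm removes one
largest valuation from the sum of all of them, so
`v_p (g_k n) + e = ∑_{m = n}^{n + k} min (v_p m) e`.

The truncated valuation `f m = min (v_p m) e` is `p ^ e`-periodic. If `T` is a period of its
window sum, comparing the telescoping steps at `0` and at `T` gives
`f 0 + f (T + k + 1) = f T + f (k + 1)`. Since `f 0 = e` and `min (f a) (f b) ≤ f (a + b)`, this
forces `f T = e` or `f (k + 1) = e`, i.e. `p ^ e ∣ T` or `p ^ e ∣ k + 1`; conversely each of these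
makes `T` a period. Hence the periods of `g_k` are exactly the multiples of `P_k`.
-/

open Finset Function

section TruncatedValuation

/-- The `p`-adic valuation of `m` truncated at `e`, with the convention `v_p 0 = ∞`. Going through
`gcd (p ^ e) m` makes it equal to `e` at `m = 0`, hence periodic on all of `ℕ`. -/
def truncVal (p e m : ℕ) : ℕ := (Nat.gcd (p ^ e) m).factorization p

variable {p e m : ℕ}

theorem truncVal_periodic_of_dvd {c : ℕ} (hc : p ^ e ∣ c) : Periodic (truncVal p e) c := by
  obtain ⟨d, rfl⟩ := hc
  have hgcd := (Nat.periodic_gcd (p ^ e)).nsmul d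
  rw [smul_eq_mul, mul_comm] at hgcd
  exact hgcd.comp fun d => d.factorization p

theorem le_truncVal_iff (hp : p.Prime) {j : ℕ} : j ≤ truncVal p e m ↔ j ≤ e ∧ p ^ j ∣ m := by
  have hgcd : Nat.gcd (p ^ e) m ≠ 0 := Nat.gcd_ne_zero_left (pow_ne_zero e hp.ne_zero)
  rw [truncVal, ← hp.pow_dvd_iff_le_factorization hgcd, Nat.dvd_gcd_iff,
    Nat.pow_dvd_pow_iff_le_right hp.one_lt]

theorem truncVal_le (hp : p.Prime) : truncVal p e m ≤ e :=
  ((le_truncVal_iff hp).1 le_rfl).1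

theorem truncVal_eq_iff (hp : p.Prime) : truncVal p e m = e ↔ p ^ e ∣ m := by
  rw [← (truncVal_le hp).ge_iff_eq, le_truncVal_iff hp, and_iff_right le_rfl]

theorem truncVal_of_ne_zero (hp : p.Prime) (hm : m ≠ 0) :
    truncVal p e m = min (m.factorization p) e :=
  eq_of_forall_le_iff fun j => by
    rw [le_truncVal_iff hp, le_min_iff, hp.pow_dvd_iff_le_factorization hm, and_comm]

theorem min_truncVal_le_truncVal_add (hp : p.Prime) (a b : ℕ) :
    min (truncVal p e a) (truncVal p e b) ≤ truncVal p e (a + b) :=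
  (le_truncVal_iff hp).2
    ⟨min_le_of_left_le (truncVal_le hp),
      dvd_add ((le_truncVal_iff hp).1 (min_le_left _ _)).2
        ((le_truncVal_iff hp).1 (min_le_right _ _)).2⟩

end TruncatedValuation

section WindowSum

/-- The sum of `f` over the window `n, n + 1, …, n + k` of `k + 1` consecutive integers. -/
def windowSum {M : Type*} [AddCommMonoid M] (f : ℕ → M) (k n : ℕ) : M :=
  ∑ m ∈ Icc n (n + k), f m

theorem windowSum_periodic {M : Type*} [AddCommMonoid M] {f : ℕ → M} {c : ℕ} (hf : Periodic f c)
    (k : ℕ) : Periodic (windowSum f k) c := fun n => by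
  rw [windowSum, windowSum, add_right_comm, ← map_add_right_Icc, sum_map]
  exact sum_congr rfl fun m _ => hf m

theorem windowSum_succ_add {M : Type*} [AddCommMonoid M] (f : ℕ → M) (k n : ℕ) :
    windowSum f k (n + 1) + f n = windowSum f k n + f (n + k + 1) := by
  rw [windowSum, windowSum, ← sum_Icc_succ_top (by lia), add_right_comm n 1 k,
    Icc_add_one_left_eq_Ioc, sum_Ioc_add_eq_sum_Icc (by lia)]

variable {M : Type*} [AddCancelCommMonoid M] {f : ℕ → M} {k T : ℕ}

theorem windowSum_periodic_of_periodic_length (hf : Periodic f (k + 1)) (T : ℕ) :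
    Periodic (windowSum f k) T := by
  have hone : Periodic (windowSum f k) 1 := fun n => by
    have hstep := windowSum_succ_add f k n
    rwa [add_assoc n k 1, hf n, add_left_inj] at hstep
  simpa only [smul_eq_mul, mul_one] using hone.nsmul T

theorem add_eq_add_of_windowSum_periodic (h : Periodic (windowSum f k) T) (n : ℕ) :
    f n + f (n + T + k + 1) = f (n + T) + f (n + k + 1) := by
  have hn := windowSum_succ_add f k n
  have hnT := windowSum_succ_add f k (n + T)
  rw [add_right_comm n T 1, h, h] at hnT
  apply add_left_cancel (a := windowSum f k n)
  calc windowSum f k n + (f n + f (n + T + k + 1))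
      = f n + (windowSum f k n + f (n + T + k + 1)) := add_left_comm _ _ _
    _ = f n + (windowSum f k (n + 1) + f (n + T)) := by rw [hnT]
    _ = f (n + T) + (windowSum f k (n + 1) + f n) := by abel
    _ = f (n + T) + (windowSum f k n + f (n + k + 1)) := by rw [hn]
    _ = windowSum f k n + (f (n + T) + f (n + k + 1)) := add_left_comm _ _ _

theorem windowSum_truncVal_periodic_iff {p : ℕ} (hp : p.Prime) (e k T : ℕ) :
    Periodic (windowSum (truncVal p e) k) T ↔ p ^ e ∣ k + 1 ∨ p ^ e ∣ T := by
  constructor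
  · intro hT
    have hexchange := add_eq_add_of_windowSum_periodic hT 0
    rw [zero_add, zero_add, (truncVal_eq_iff hp).2 (dvd_zero _), add_assoc T] at hexchange
    have hmin := min_truncVal_le_truncVal_add (e := e) hp T (k + 1)
    have hleT : truncVal p e T ≤ e := truncVal_le hp
    have hlek : truncVal p e (k + 1) ≤ e := truncVal_le hp
    rw [← truncVal_eq_iff hp, ← truncVal_eq_iff hp]
    lia
  · rintro (hk | hT)
    · exact windowSum_periodic_of_periodic_length (truncVal_periodic_of_dvd hk) T
    · exact windowSum_periodic (truncVal_periodic_of_dvd hT) k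

end WindowSum

section ValuationFormula

theorem sum_add_eq_sum_min_add_sup {ι M : Type*} [AddCommMonoid M] [LinearOrder M] [OrderBot M]
    {s : Finset ι} {v : ι → M} {e : M} (hlarge : ∃ i ∈ s, e ≤ v i)
    (hpair : (s : Set ι).Pairwise fun i j => min (v i) (v j) ≤ e) :
    ∑ i ∈ s, v i + e = ∑ i ∈ s, min (v i) e + s.sup v := by
  classical
  obtain ⟨i₀, hi₀, hle₀⟩ := hlarge
  obtain ⟨i, hi, hsup⟩ := s.exists_mem_eq_sup ⟨i₀, hi₀⟩ v
  have hle : ∀ j ∈ s, v j ≤ v i := fun j hj => (le_sup hj).trans_eq hsup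
  have hmin_rest : ∀ j ∈ s.erase i, min (v j) e = v j := fun j hj => by
    obtain ⟨hji, hjs⟩ := mem_erase.1 hj
    have hpair_ji : min (v j) (v i) ≤ e := hpair hjs hi hji
    rw [min_eq_left (hle j hjs)] at hpair_ji
    exact min_eq_left hpair_ji
  rw [hsup, ← add_sum_erase s v hi, ← add_sum_erase s (fun j => min (v j) e) hi,
    sum_congr rfl hmin_rest, min_eq_right (hle₀.trans (hle i₀ hi₀))]
  abel

theorem exists_mem_Icc_dvd_s7 {q k : ℕ} (hq : 0 < q) (hqk : q ≤ k + 1) (n : ℕ) :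
    ∃ m ∈ Icc n (n + k), q ∣ m := by
  refine ⟨q * ((n + q - 1) / q), mem_Icc.2 ?_, dvd_mul_right _ _⟩
  have hdiv := Nat.div_add_mod (n + q - 1) q
  have hmod := Nat.mod_lt (n + q - 1) hq
  lia

theorem min_factorization_le_log_sub {p a b : ℕ} (hp : p.Prime) (hab : a < b) :
    min (a.factorization p) (b.factorization p) ≤ Nat.log p (b - a) := by
  have hdvd : p ^ min (a.factorization p) (b.factorization p) ∣ b - a :=
    Nat.dvd_sub ((pow_dvd_pow p (min_le_right _ _)).trans (Nat.ordProj_dvd b p))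
      ((pow_dvd_pow p (min_le_left _ _)).trans (Nat.ordProj_dvd a p))
  exact Nat.le_log_of_pow_le hp.one_lt (Nat.le_of_dvd (Nat.sub_pos_of_lt hab) hdvd)

theorem pairwise_min_factorization_le_log {p : ℕ} (hp : p.Prime) (k n : ℕ) :
    (Icc n (n + k) : Set ℕ).Pairwise fun a b =>
      min (a.factorization p) (b.factorization p) ≤ Nat.log p k := by
  intro a ha b hb hab
  rw [coe_Icc, Set.mem_Icc] at ha hb
  wlog hlt : a < b generalizing a b
  · rw [min_comm]
    exact this hb ha hab.symm (by lia)
  exact (min_factorization_le_log_sub hp hlt).trans (Nat.log_mono_right (by lia))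

theorem farhiG_mul_rangeLcm (k n : ℕ) :
    farhiG k n * rangeLcm n (n + k) = ∏ m ∈ Icc n (n + k), m :=
  Nat.div_mul_cancel (lcm_dvd_prod _ id)

variable {k n : ℕ}

theorem farhiG_mul_rangeLcm_ne_zero (hn : 1 ≤ n) : farhiG k n * rangeLcm n (n + k) ≠ 0 := by
  rw [farhiG_mul_rangeLcm, prod_ne_zero_iff]
  intro m hm
  exact Nat.one_le_iff_ne_zero.1 (hn.trans (mem_Icc.1 hm).1)

theorem factorization_farhiG_add_sup (hn : 1 ≤ n) (p : ℕ) :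
    (farhiG k n).factorization p + (Icc n (n + k)).sup (fun m => m.factorization p) =
      ∑ m ∈ Icc n (n + k), m.factorization p := by
  have hpos : ∀ m ∈ Icc n (n + k), m ≠ 0 := fun m hm => by grind
  obtain ⟨hfarhi, hlcm⟩ := mul_ne_zero_iff.1 (farhiG_mul_rangeLcm_ne_zero (k := k) hn)
  rw [← Nat.factorization_prod_apply hpos, ← farhiG_mul_rangeLcm,
    Nat.factorization_mul hfarhi hlcm, Finsupp.add_apply, rangeLcm,
    factorization_lcm (f := id) hpos]
  rfl

theorem factorization_farhiG_add_log (hn : 1 ≤ n) {p : ℕ} (hp : p.Prime) :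
    (farhiG k n).factorization p + Nat.log p k = windowSum (truncVal p (Nat.log p k)) k n := by
  have hpos : ∀ m ∈ Icc n (n + k), m ≠ 0 := fun m hm => by grind
  have hlarge : ∃ m ∈ Icc n (n + k), Nat.log p k ≤ m.factorization p := by
    obtain ⟨m, hm, hdvd⟩ :=
      exists_mem_Icc_dvd_s7 (pow_pos hp.pos (Nat.log p k)) (Nat.pow_log_le_add_one p k) n
    exact ⟨m, hm, (hp.pow_dvd_iff_le_factorization (hpos m hm)).1 hdvd⟩
  have hsum := sum_add_eq_sum_min_add_sup hlarge (pairwise_min_factorization_le_log hp k n)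
  have hwindow : windowSum (truncVal p (Nat.log p k)) k n =
      ∑ m ∈ Icc n (n + k), min (m.factorization p) (Nat.log p k) :=
    sum_congr rfl fun m hm => truncVal_of_ne_zero hp (hpos m hm)
  have hsup := factorization_farhiG_add_sup (k := k) hn p
  lia

end ValuationFormula

section Period

/-- The exponent `β_p` of the prime `p` in the smallest period `P_k` of `g_k`. -/
def farhiExponent (k p : ℕ) : ℕ :=
  if (Icc 1 k).sup (fun i => i.factorization p) ≤ (k + 1).factorization p
    then 0 else (Icc 1 k).sup (fun i => i.factorization p)

/-- The smallest period `P_k` of `g_k`. -/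
def farhiPeriod (k : ℕ) : ℕ := ∏ p ∈ (range (k + 1)).filter Nat.Prime, p ^ farhiExponent k p

theorem farhiPeriod_pos (k : ℕ) : 0 < farhiPeriod k :=
  prod_pos fun _ hp => pow_pos (mem_filter.1 hp).2.pos _

theorem sup_factorization_Icc_one {p : ℕ} (hp : p.Prime) (k : ℕ) :
    (Icc 1 k).sup (fun i => i.factorization p) = Nat.log p k := by
  rw [← Nat.factorization_lcmUpto k hp, Nat.lcmUpto, factorization_lcm (f := id) (by grind)]
  rfl

theorem pow_farhiExponent_dvd_iff {p : ℕ} (hp : p.Prime) (k T : ℕ) :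
    p ^ farhiExponent k p ∣ T ↔ p ^ Nat.log p k ∣ k + 1 ∨ p ^ Nat.log p k ∣ T := by
  simp only [farhiExponent, sup_factorization_Icc_one hp,
    ← hp.pow_dvd_iff_le_factorization k.succ_ne_zero]
  split_ifs with hdvd <;> simp [hdvd]

theorem prod_prime_pow_dvd_iff {s : Finset ℕ} (hs : ∀ p ∈ s, p.Prime) (b : ℕ → ℕ) (T : ℕ) :
    ∏ p ∈ s, p ^ b p ∣ T ↔ ∀ p ∈ s, p ^ b p ∣ T := by
  refine ⟨fun h p hp => (dvd_prod_of_mem (fun p => p ^ b p) hp).trans h, fun h => ?_⟩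
  refine prod_dvd_of_isRelPrime (fun p hp q hq hpq => ?_) h
  exact Nat.coprime_iff_isRelPrime.1
    (Nat.Coprime.pow _ _ ((Nat.coprime_primes (hs p hp) (hs q hq)).2 hpq))

theorem farhiPeriod_dvd_iff (k T : ℕ) :
    farhiPeriod k ∣ T ↔ ∀ p, p.Prime → p ^ Nat.log p k ∣ k + 1 ∨ p ^ Nat.log p k ∣ T := by
  rw [farhiPeriod, prod_prime_pow_dvd_iff fun p hp => (mem_filter.1 hp).2]
  constructor
  · intro h p hp
    by_cases hpk : p ≤ k
    · exact (pow_farhiExponent_dvd_iff hp k T).1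
        (h p (mem_filter.2 ⟨mem_range_succ_iff.2 hpk, hp⟩))
    · simp only [Nat.log_of_lt (not_le.1 hpk), pow_zero, one_dvd, or_self]
  · intro h p hp
    have hprime := (mem_filter.1 hp).2
    exact (pow_farhiExponent_dvd_iff hprime k T).2 (h p hprime)

theorem periodic_of_forall_pos {α : Type*} {f : ℕ → α} {q T : ℕ} (hf : Periodic f q) (hq : 0 < q)
    (h : ∀ n, 1 ≤ n → f (n + T) = f n) : Periodic f T := fun n => by
  rw [← hf (n + T), add_right_comm, h (n + q) (by lia), hf n]

theorem farhiG_period_iff_windowSum_periodic (k T : ℕ) :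
    (∀ n, 1 ≤ n → farhiG k (n + T) = farhiG k n) ↔
      ∀ p, p.Prime → Periodic (windowSum (truncVal p (Nat.log p k)) k) T := by
  constructor
  · intro hT p hp
    refine periodic_of_forall_pos (windowSum_periodic (truncVal_periodic_of_dvd dvd_rfl) k)
      (pow_pos hp.pos _) fun n hn => ?_
    rw [← factorization_farhiG_add_log hn hp, ← factorization_farhiG_add_log (by lia) hp, hT n hn]
  · intro hT n hn
    have hnT : 1 ≤ n + T := by lia
    refine Nat.eq_of_factorization_eq (left_ne_zero_of_mul (farhiG_mul_rangeLcm_ne_zero hnT))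
      (left_ne_zero_of_mul (farhiG_mul_rangeLcm_ne_zero hn)) fun p => ?_
    by_cases hp : p.Prime
    · have hwindow := hT p hp n
      rwa [← factorization_farhiG_add_log hn hp, ← factorization_farhiG_add_log hnT hp,
        add_left_inj] at hwindow
    · rw [Nat.factorization_eq_zero_of_not_prime _ hp, Nat.factorization_eq_zero_of_not_prime _ hp]

theorem farhiG_period_iff_dvd (k T : ℕ) :
    (∀ n, 1 ≤ n → farhiG k (n + T) = farhiG k n) ↔ farhiPeriod k ∣ T := by
  rw [farhiG_period_iff_windowSum_periodic, farhiPeriod_dvd_iff]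
  exact forall₂_congr fun p hp => windowSum_truncVal_periodic_iff hp _ k T

end Period

/-- For `k ≥ 1`, the function `g_k` is periodic on positive integers and its
smallest period is `P_k = ∏_{p prime, p ≤ k} p^{β_p}`, where `β_p = 0` if
`v_p(k+1) ≥ max_{1 ≤ i ≤ k} v_p(i)` and `β_p = max_{1 ≤ i ≤ k} v_p(i)` otherwise. -/
theorem farhiG_periodic_smallest_period (k : ℕ) (hk : 1 ≤ k) :
    let β : ℕ → ℕ := fun p =>
      if (Finset.Icc 1 k).sup (fun i => i.factorization p) ≤ (k + 1).factorization p
        then 0 else (Finset.Icc 1 k).sup (fun i => i.factorization p)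
    let P : ℕ := ∏ p ∈ (Finset.range (k + 1)).filter Nat.Prime, p ^ β p
    0 < P ∧ (∀ n, 1 ≤ n → farhiG k (n + P) = farhiG k n) ∧
      ∀ T : ℕ, 0 < T → (∀ n, 1 ≤ n → farhiG k (n + T) = farhiG k n) → P ≤ T := by
  intro β P
  have hperiod (T : ℕ) : (∀ n, 1 ≤ n → farhiG k (n + T) = farhiG k n) ↔ P ∣ T :=
    farhiG_period_iff_dvd k T
  exact ⟨farhiPeriod_pos k, (hperiod P).2 dvd_rfl,
    fun T hT h => Nat.le_of_dvd hT ((hperiod T).1 h)⟩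
end

section
/- For every natural number k ≥ 1, the positive integer lcm(1, 2, …, k) is a period of the function g_k; that is, g_k(n + lcm(1, …, k)) = g_k(n) for every positive integer n, where g_k(n) := n(n+1)⋯(n+k) / lcm(n, n+1, …, n+k). -/
/-!
Since `a * b = gcd a b * lcm a b` and `gcd` distributes over `lcm`, adjoining `a` to a finite family
multiplies the quotient of its product by its lcm by the lcm of all `gcd a b` with `b` in the
family. Hence this quotient depends only on the pairwise gcds of the family. Two distinct elements
of `{n, …, n + k}` differ by at most `k`, so their difference divides `lcm(1, …, k)`, and
translating both by `lcm(1, …, k)` does not change their gcd.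
-/

section GCDMonoid

variable {α : Type*} [CommMonoidWithZero α]

theorem dvd_gcd_mul_gcd [GCDMonoid α] {x a b c d : α} (hac : x ∣ a * c) (had : x ∣ a * d)
    (hbc : x ∣ b * c) (hbd : x ∣ b * d) : x ∣ gcd a b * gcd c d :=
  have dvd_gcd_mul {y : α} (ha : x ∣ a * y) (hb : x ∣ b * y) : x ∣ gcd a b * y :=
    (dvd_gcd ha hb).trans (gcd_mul_right' y a b).dvd
  (dvd_gcd (dvd_gcd_mul hac hbc) (dvd_gcd_mul had hbd)).trans (gcd_mul_left' (gcd a b) c d).dvd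

theorem gcd_lcm_dvd_lcm_gcd_gcd [GCDMonoid α] (a b c : α) :
    gcd a (lcm b c) ∣ lcm (gcd a b) (gcd a c) := by
  set g := gcd (gcd a b) (gcd a c)
  obtain hg0 | hg0 := eq_or_ne g 0
  · rw [((gcd_eq_zero_iff _ _).1 hg0).1, lcm_zero_left]
    exact dvd_zero _
  have hga : g ∣ a := (gcd_dvd_left _ _).trans (gcd_dvd_left a b)
  have hgb : g ∣ b := (gcd_dvd_left _ _).trans (gcd_dvd_right a b)
  have hgc : g ∣ c := (gcd_dvd_right _ _).trans (gcd_dvd_right a c)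
  have hla : gcd a (lcm b c) ∣ a := gcd_dvd_left _ _
  have hlbc : g * gcd a (lcm b c) ∣ b * c :=
    (mul_dvd_mul (dvd_gcd hgb hgc) (gcd_dvd_right _ _)).trans (gcd_mul_lcm b c).dvd
  have hg_mul : g * gcd a (lcm b c) ∣ gcd a b * gcd a c :=
    dvd_gcd_mul_gcd (mul_dvd_mul hga hla) (mul_comm a c ▸ mul_dvd_mul hgc hla)
      (mul_dvd_mul hgb hla) hlbc
  exact (mul_dvd_mul_iff_left hg0).1 (hg_mul.trans (gcd_mul_lcm _ _).symm.dvd)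

variable [NormalizedGCDMonoid α]

theorem gcd_lcm_left (a b c : α) : gcd a (lcm b c) = lcm (gcd a b) (gcd a c) :=
  dvd_antisymm_of_normalize_eq (normalize_gcd _ _) (normalize_lcm _ _)
    (gcd_lcm_dvd_lcm_gcd_gcd a b c)
    (lcm_dvd (gcd_dvd_gcd dvd_rfl (dvd_lcm_left b c)) (gcd_dvd_gcd dvd_rfl (dvd_lcm_right b c)))

variable {ι : Type*}

theorem gcd_finset_lcm (a : α) (s : Finset ι) (f : ι → α) :
    gcd a (s.lcm f) = s.lcm fun i ↦ gcd a (f i) := by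
  classical
  induction s using Finset.induction_on with
  | empty => simp
  | insert i s _ ih => rw [Finset.lcm_insert, Finset.lcm_insert, gcd_lcm_left, ih]

theorem exists_prod_associated_mul_lcm_of_pairwise_gcd_eq {s : Finset ι} {f g : ι → α}
    (h : (s : Set ι).Pairwise fun i j ↦ gcd (f i) (f j) = gcd (g i) (g j)) :
    ∃ d, Associated (∏ i ∈ s, f i) (d * s.lcm f) ∧ Associated (∏ i ∈ s, g i) (d * s.lcm g) := by
  classical
  induction s using Finset.induction_on with
  | empty => exact ⟨1, by simp⟩
  | insert i s hi ih =>
    obtain ⟨d, hf, hg⟩ := ih (h.mono (by simp))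
    have gcd_eq : gcd (f i) (s.lcm f) = gcd (g i) (s.lcm g) := by
      rw [gcd_finset_lcm, gcd_finset_lcm]
      exact Finset.lcm_congr rfl fun j hj ↦
        h (by simp) (by simp [hj]) (ne_of_mem_of_not_mem hj hi).symm
    have prod_insert {u : ι → α} (hu : Associated (∏ j ∈ s, u j) (d * s.lcm u)) :
        Associated (∏ j ∈ insert i s, u j) (d * gcd (u i) (s.lcm u) * (insert i s).lcm u) := by
      rw [Finset.prod_insert hi, Finset.lcm_insert, mul_assoc]
      calc
        Associated (u i * ∏ j ∈ s, u j) (u i * (d * s.lcm u)) := hu.mul_left _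
        _ = d * (u i * s.lcm u) := mul_left_comm _ _ _
        Associated _ (d * (gcd (u i) (s.lcm u) * lcm (u i) (s.lcm u))) :=
          (gcd_mul_lcm _ _).symm.mul_left _
    exact ⟨d * gcd (f i) (s.lcm f), prod_insert hf, gcd_eq ▸ prod_insert hg⟩

end GCDMonoid

theorem prod_div_lcm_eq_of_pairwise_gcd_eq {ι : Type*} {s : Finset ι} {f g : ι → ℕ}
    (hf : ∀ i ∈ s, f i ≠ 0) (hg : ∀ i ∈ s, g i ≠ 0)
    (h : (s : Set ι).Pairwise fun i j ↦ (f i).gcd (f j) = (g i).gcd (g j)) :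
    (∏ i ∈ s, f i) / s.lcm f = (∏ i ∈ s, g i) / s.lcm g := by
  obtain ⟨d, hdf, hdg⟩ := exists_prod_associated_mul_lcm_of_pairwise_gcd_eq h
  have lcm_pos {u : ι → ℕ} (hu : ∀ i ∈ s, u i ≠ 0) : 0 < s.lcm u :=
    Nat.pos_of_ne_zero (Finset.lcm_ne_zero_iff.2 hu)
  rw [associated_iff_eq.1 hdf, associated_iff_eq.1 hdg, Nat.mul_div_cancel _ (lcm_pos hf),
    Nat.mul_div_cancel _ (lcm_pos hg)]

theorem gcd_add_right_add_right_of_sub_dvd {a b m : ℕ} (hab : a ≤ b) (hm : b - a ∣ m) :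
    (a + m).gcd (b + m) = a.gcd b :=
  calc
    (a + m).gcd (b + m) = (a + m).gcd (b - a) := by
      rw [← Nat.gcd_sub_self_right (Nat.add_le_add_right hab m), Nat.add_sub_add_right]
    _ = a.gcd (b - a) := Nat.gcd_add_right_left_of_dvd a hm
    _ = a.gcd b := Nat.gcd_sub_self_right hab

theorem dvd_rangeLcm_s8 {a b d : ℕ} (had : a ≤ d) (hdb : d ≤ b) : d ∣ rangeLcm a b :=
  Finset.dvd_lcm (f := id) (Finset.mem_Icc.2 ⟨had, hdb⟩)

theorem farhiG_add (k n m : ℕ) :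
    farhiG k (n + m) =
      (∏ i ∈ Finset.Icc n (n + k), (i + m)) / (Finset.Icc n (n + k)).lcm (· + m) := by
  rw [farhiG, rangeLcm, add_right_comm, ← Finset.image_add_right_Icc,
    Finset.prod_image (add_left_injective m).injOn, Finset.lcm_image, Function.id_comp]

theorem pairwise_Icc_gcd_add_rangeLcm (k n : ℕ) :
    (Finset.Icc n (n + k) : Set ℕ).Pairwise fun i j ↦
      (i + rangeLcm 1 k).gcd (j + rangeLcm 1 k) = i.gcd j := by
  have gcd_add {i j : ℕ} (hi : n ≤ i) (hj : j ≤ n + k) (hij : i < j) :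
      (i + rangeLcm 1 k).gcd (j + rangeLcm 1 k) = i.gcd j :=
    gcd_add_right_add_right_of_sub_dvd hij.le (dvd_rangeLcm_s8 (by omega) (by omega))
  intro i hi j hj hij
  rw [Finset.mem_coe, Finset.mem_Icc] at hi hj
  obtain hij | hji := hij.lt_or_gt
  · exact gcd_add hi.1 hj.2 hij
  · simpa only [Nat.gcd_comm] using gcd_add hj.1 hi.2 hji

/-- For `k ≥ 1`, `lcm(1, 2, …, k)` is a period of `g_k`. -/
theorem rangeLcm_period_farhiG (k : ℕ) (hk : 1 ≤ k) (n : ℕ) (hn : 1 ≤ n) :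
    farhiG k (n + rangeLcm 1 k) = farhiG k n := by
  have pos {i : ℕ} (hi : i ∈ Finset.Icc n (n + k)) : 0 < i := hn.trans (Finset.mem_Icc.1 hi).1
  rw [farhiG_add]
  exact prod_div_lcm_eq_of_pairwise_gcd_eq (fun i hi ↦ (Nat.add_pos_left (pos hi) _).ne')
    (fun i hi ↦ (pos hi).ne') (pairwise_Icc_gcd_add_rangeLcm k n)
end

section
/- Let p be a prime and let n ≥ k ≥ 1 be natural numbers. Then the p-adic valuation of lcm(n, n−1, …, n−k+1) equals the greatest natural number α such that ⌊n/p^α⌋ − ⌊(n−k)/p^α⌋ ≥ 1. -/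
/-!
The exponent of `p` in an lcm is the largest exponent of `p` in any of its terms, so `α` is at most
the exponent of `p` in `lcm(n - k + 1, …, n)` exactly when one of these terms is a multiple of
`p ^ α`, that is, when `⌊x / p ^ α⌋` increases between `x = n - k` and `x = n`.
-/

theorem le_factorization_finset_lcm_iff {ι : Type*} {s : Finset ι} {f : ι → ℕ} (hs : s.Nonempty)
    (hf : ∀ i ∈ s, f i ≠ 0) (p α : ℕ) :
    α ≤ (s.lcm f).factorization p ↔ ∃ i ∈ s, α ≤ (f i).factorization p := by
  rw [Finset.factorization_lcm hf, ← Finset.sup'_eq_sup hs, Finset.le_sup'_iff]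

theorem exists_mem_Ioc_dvd_iff_div_lt_div (a b d : ℕ) :
    (∃ m ∈ Finset.Ioc a b, d ∣ m) ↔ a / d < b / d := by
  constructor
  · rintro ⟨m, hm, hdm⟩
    obtain ⟨ham, hmb⟩ := Finset.mem_Ioc.1 hm
    exact (Nat.div_lt_div_of_lt_of_dvd hdm ham).trans_le (Nat.div_le_div_right hmb)
  · intro h
    have hd : 0 < d := Nat.pos_of_ne_zero fun hd => by simp [hd] at h
    exact ⟨b / d * d, Finset.mem_Ioc.2 ⟨(Nat.div_lt_iff_lt_mul hd).1 h, Nat.div_mul_le_self b d⟩,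
      Nat.dvd_mul_left d (b / d)⟩

theorem le_factorization_rangeLcm_iff {p a b : ℕ} (hp : p.Prime) (hab : a < b) (α : ℕ) :
    α ≤ (rangeLcm (a + 1) b).factorization p ↔ a / p ^ α < b / p ^ α := by
  have hne : ∀ m ∈ Finset.Ioc a b, m ≠ 0 := fun m hm => Nat.ne_zero_of_lt (Finset.mem_Ioc.1 hm).1
  calc α ≤ (rangeLcm (a + 1) b).factorization p
      ↔ ∃ m ∈ Finset.Ioc a b, α ≤ m.factorization p := by
        rw [rangeLcm, Finset.Icc_add_one_left_eq_Ioc]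
        exact le_factorization_finset_lcm_iff (Finset.nonempty_Ioc.2 hab) hne p α
    _ ↔ ∃ m ∈ Finset.Ioc a b, p ^ α ∣ m :=
        exists_congr fun m => and_congr_right fun hm =>
          (hp.pow_dvd_iff_le_factorization (hne m hm)).symm
    _ ↔ a / p ^ α < b / p ^ α := exists_mem_Ioc_dvd_iff_div_lt_div a b (p ^ α)

/-- For `p` prime and `n ≥ k ≥ 1`, the `p`-adic valuation of
`lcm(n, n-1, …, n-k+1)` is the greatest `α` with `⌊n/p^α⌋ - ⌊(n-k)/p^α⌋ ≥ 1`. -/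
theorem factorization_rangeLcm_eq_greatest (p n k : ℕ) (hp : p.Prime)
    (hk : 1 ≤ k) (h : k ≤ n) :
    let a := (rangeLcm (n - k + 1) n).factorization p
    1 ≤ n / p ^ a - (n - k) / p ^ a ∧
      ∀ α : ℕ, 1 ≤ n / p ^ α - (n - k) / p ^ α → α ≤ a := by
  intro a
  have hlt : n - k < n := Nat.sub_lt (hk.trans h) hk
  have le_a_iff (α : ℕ) : α ≤ a ↔ 1 ≤ n / p ^ α - (n - k) / p ^ α :=
    (le_factorization_rangeLcm_iff hp hlt α).trans Nat.sub_pos_iff_lt.symm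
  exact ⟨(le_a_iff a).1 le_rfl, fun α => (le_a_iff α).2⟩
end

section
/- For every natural number n ≥ 1, lcm(n, n−1, …, n−⌈n/2⌉+1) = lcm(1, 2, …, n), where ⌈·⌉ denotes the ceiling function; i.e., the lcm of the upper half of the integers from 1 to n equals the lcm of all of them. -/
theorem dvd_rangeLcm_s11 {a b k : ℕ} (hak : a ≤ k) (hkb : k ≤ b) : k ∣ rangeLcm a b :=
  Finset.dvd_lcm (f := id) (Finset.mem_Icc.2 ⟨hak, hkb⟩)

theorem rangeLcm_eq_lcm_rangeLcm_add_one {a b : ℕ} (hab : a ≤ b) :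
    rangeLcm a b = Nat.lcm a (rangeLcm (a + 1) b) := by
  rw [rangeLcm, ← Finset.insert_Icc_add_one_left_eq_Icc hab, Finset.lcm_insert]
  rfl

/-- Dropping `a` loses no divisibility, because its multiple `2 * a` is still in the range. -/
theorem rangeLcm_add_one_eq_rangeLcm {a n : ℕ} (ha : 0 < a) (han : 2 * a ≤ n) :
    rangeLcm (a + 1) n = rangeLcm a n := by
  have a_dvd : a ∣ rangeLcm (a + 1) n :=
    (Nat.dvd_mul_left a 2).trans (dvd_rangeLcm_s11 (by lia) han)
  rw [rangeLcm_eq_lcm_rangeLcm_add_one (by lia : a ≤ n), Nat.lcm_eq_right a_dvd]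

theorem rangeLcm_add_one_eq_rangeLcm_one {a n : ℕ} (han : 2 * a ≤ n) :
    rangeLcm (a + 1) n = rangeLcm 1 n := by
  induction a with
  | zero => rfl
  | succ a ih =>
    calc rangeLcm (a + 1 + 1) n
      _ = rangeLcm (a + 1) n := rangeLcm_add_one_eq_rangeLcm a.succ_pos han
      _ = rangeLcm 1 n := ih (by lia)

/-- For `n ≥ 1`, `lcm(n, n-1, …, n-⌈n/2⌉+1) = lcm(1, 2, …, n)`
(here `⌈n/2⌉ = (n+1)/2` in natural division). -/
theorem rangeLcm_upper_half_eq (n : ℕ) (hn : 1 ≤ n) :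
    rangeLcm (n - (n + 1) / 2 + 1) n = rangeLcm 1 n :=
  have two_mul_le : 2 * (n - (n + 1) / 2) ≤ n := by lia
  rangeLcm_add_one_eq_rangeLcm_one two_mul_le
end

section
/- For every natural number n ≥ 0, lcm(1, 2, …, n) ≤ 2^n · lcm(1, 2, …, ⌈n/2⌉), where ⌈·⌉ denotes the ceiling function and lcm(1, …, 0) := 1. -/
open Nat (lcmUpto lcmUpto_ne_zero lcmUpto_pos factorization_lcmUpto)

theorem rangeLcm_one_eq_lcmUpto (n : ℕ) : rangeLcm 1 n = lcmUpto n := rfl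

theorem log_add_le_factorization_choose_add_log_max {p : ℕ} (hp : p.Prime) (m n : ℕ) :
    Nat.log p (m + n) ≤ ((m + n).choose n).factorization p + Nat.log p (max m n) := by
  rw [← Nat.sub_le_iff_le_add, ← Nat.card_Ioc,
    Nat.factorization_choose' hp (Nat.lt_succ_self (Nat.log p (m + n)))]
  refine Finset.card_le_card fun i hi => ?_
  obtain ⟨hlog_lt, hle_log⟩ := Finset.mem_Ioc.mp hi
  obtain ⟨hm, hn⟩ : m < p ^ i ∧ n < p ^ i :=
    max_lt_iff.mp (Nat.lt_pow_of_log_lt hp.one_lt hlog_lt)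
  have hadd : m + n ≠ 0 := by
    intro h
    rw [h, Nat.log_zero_right] at hle_log
    omega
  have hcarry : p ^ i ≤ n % p ^ i + m % p ^ i := by
    rw [Nat.mod_eq_of_lt hm, Nat.mod_eq_of_lt hn, add_comm]
    exact Nat.pow_le_of_le_log hadd hle_log
  exact Finset.mem_filter.mpr ⟨Finset.mem_Ico.mpr (by omega), hcarry⟩

theorem lcmUpto_add_dvd_choose_mul_lcmUpto_max (m n : ℕ) :
    lcmUpto (m + n) ∣ (m + n).choose n * lcmUpto (max m n) := by
  have hchoose : (m + n).choose n ≠ 0 := Nat.choose_ne_zero (Nat.le_add_left n m)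
  have hlcm : lcmUpto (max m n) ≠ 0 := lcmUpto_ne_zero _
  rw [← Nat.factorization_prime_le_iff_dvd (lcmUpto_ne_zero _) (mul_ne_zero hchoose hlcm)]
  intro p hp
  rw [Nat.factorization_mul hchoose hlcm, Finsupp.add_apply,
    factorization_lcmUpto _ hp, factorization_lcmUpto _ hp]
  exact log_add_le_factorization_choose_add_log_max hp m n

theorem lcmUpto_add_le_two_pow_mul_lcmUpto_max (m n : ℕ) :
    lcmUpto (m + n) ≤ 2 ^ (m + n) * lcmUpto (max m n) :=
  calc lcmUpto (m + n)
      ≤ (m + n).choose n * lcmUpto (max m n) :=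
        Nat.le_of_dvd (Nat.mul_pos (Nat.choose_pos (Nat.le_add_left n m)) (lcmUpto_pos _))
          (lcmUpto_add_dvd_choose_mul_lcmUpto_max m n)
    _ ≤ 2 ^ (m + n) * lcmUpto (max m n) :=
        Nat.mul_le_mul_right _ (Nat.choose_le_two_pow (m + n) n)

/-- For every `n`, `lcm(1, …, n) ≤ 2^n · lcm(1, …, ⌈n/2⌉)`
(here `⌈n/2⌉ = (n+1)/2` in natural division). -/
theorem rangeLcm_le_two_pow_mul (n : ℕ) :
    rangeLcm 1 n ≤ 2 ^ n * rangeLcm 1 ((n + 1) / 2) := by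
  have hsplit : n / 2 + (n + 1) / 2 = n := by omega
  have hmax : max (n / 2) ((n + 1) / 2) = (n + 1) / 2 := by omega
  have hbound := lcmUpto_add_le_two_pow_mul_lcmUpto_max (n / 2) ((n + 1) / 2)
  rw [hsplit, hmax] at hbound
  rwa [rangeLcm_one_eq_lcmUpto, rangeLcm_one_eq_lcmUpto]
end

section
/- For every natural number n ≥ 1, lcm(1, 2, …, n) ≤ n · 4^n. -/
/-!
If `n ≤ m`, then every power of a prime `p` in the interval `(m, m + n]` forces a carry when `m` and
`n` are added in base `p`, so by Kummer's theorem `lcm(1, …, m + n)` divides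
`lcm(1, …, m) * (m + n).choose n`. For `n / 2` and `n - n / 2` in place of `n` and `m` the binomial
coefficient is at most `4 ^ (n / 2)`, and strong induction gives even `lcm(1, …, n) ≤ 4 ^ n`.
-/

lemma log_add_le_log_add_factorization_choose {p m n : ℕ} (hp : p.Prime) (hnm : n ≤ m) :
    p.log (m + n) ≤ p.log m + ((m + n).choose n).factorization p := by
  have carries : Finset.Ico (p.log m + 1) (p.log (m + n) + 1) ⊆
      {i ∈ Finset.Ico 1 (p.log (m + n) + 1) | p ^ i ≤ n % p ^ i + m % p ^ i} := by
    intro i hi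
    obtain ⟨log_lt, le_log⟩ : p.log m < i ∧ i ≤ p.log (m + n) := by
      rwa [Finset.mem_Ico, Nat.succ_le_iff, Nat.lt_succ_iff] at hi
    have lt_pow : m < p ^ i := Nat.lt_pow_of_log_lt hp.one_lt log_lt
    have add_ne_zero : m + n ≠ 0 := by
      intro h
      rw [h, Nat.log_zero_right] at le_log
      lia
    have pow_le : p ^ i ≤ m + n := Nat.pow_le_of_le_log add_ne_zero le_log
    rw [Finset.mem_filter, Finset.mem_Ico, Nat.mod_eq_of_lt lt_pow,
      Nat.mod_eq_of_lt (hnm.trans_lt lt_pow)]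
    lia
  have card_le := Finset.card_le_card carries
  rw [← Nat.factorization_choose' hp (Nat.lt_succ_self _), Nat.card_Ico] at card_le
  lia

theorem lcmUpto_add_dvd {m n : ℕ} (hnm : n ≤ m) :
    (m + n).lcmUpto ∣ m.lcmUpto * (m + n).choose n := by
  have lcm_ne_zero : m.lcmUpto ≠ 0 := m.lcmUpto_ne_zero
  have choose_ne_zero : (m + n).choose n ≠ 0 := Nat.choose_ne_zero (Nat.le_add_left n m)
  rw [← Nat.factorization_prime_le_iff_dvd (m + n).lcmUpto_ne_zero
    (mul_ne_zero lcm_ne_zero choose_ne_zero)]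
  intro p hp
  rw [Nat.factorization_mul lcm_ne_zero choose_ne_zero, Finsupp.add_apply,
    Nat.factorization_lcmUpto _ hp, Nat.factorization_lcmUpto _ hp]
  exact log_add_le_log_add_factorization_choose hp hnm

theorem lcmUpto_add_le {m n : ℕ} (hnm : n ≤ m) :
    (m + n).lcmUpto ≤ m.lcmUpto * (m + n).choose n :=
  Nat.le_of_dvd (Nat.mul_pos m.lcmUpto_pos (Nat.choose_pos (Nat.le_add_left n m)))
    (lcmUpto_add_dvd hnm)

lemma choose_half_le_four_pow_half (n : ℕ) : n.choose (n / 2) ≤ 4 ^ (n / 2) := by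
  obtain ⟨k, rfl | rfl⟩ := n.even_or_odd'
  · rw [Nat.mul_div_cancel_left k two_pos]
    exact k.centralBinom_le_four_pow
  · rw [show (2 * k + 1) / 2 = k by lia]
    exact Nat.choose_middle_le_pow k

theorem rangeLcm_le_mul_four_pow_general (n : ℕ) : rangeLcm 1 n ≤ 4 ^ n := by
  change n.lcmUpto ≤ 4 ^ n
  induction n using Nat.strong_induction_on with
  | _ n ih =>
    obtain hn | hn := Nat.lt_or_ge n 2
    · interval_cases n <;> decide
    have split : n - n / 2 + n / 2 = n := Nat.sub_add_cancel (Nat.div_le_self n 2)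
    calc
      n.lcmUpto ≤ (n - n / 2).lcmUpto * n.choose (n / 2) := by
        simpa only [split] using lcmUpto_add_le (show n / 2 ≤ n - n / 2 by lia)
      _ ≤ 4 ^ (n - n / 2) * 4 ^ (n / 2) :=
        Nat.mul_le_mul (ih (n - n / 2) (by lia)) (choose_half_le_four_pow_half n)
      _ = 4 ^ n := by rw [← pow_add, split]

/-- For every `n ≥ 1`, `lcm(1, 2, …, n) ≤ n · 4^n`. -/
theorem rangeLcm_le_mul_four_pow (n : ℕ) (hn : 1 ≤ n) :
    rangeLcm 1 n ≤ n * 4 ^ n :=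
  (rangeLcm_le_mul_four_pow_general n).trans (Nat.le_mul_of_pos_left _ hn)
end

section
/- For all natural numbers n ≥ 1 and k ≥ 0, the number Ω(lcm(1, 2, …, n+k) / lcm(1, 2, …, n)) of prime factors, counted with multiplicity, of the integer lcm(1, 2, …, n+k) / lcm(1, 2, …, n) is at most k. -/
/-!
If `p` is a prime factor of `m + 1`, then `(m + 1) / p` is one of `1, …, m`, so `m + 1` divides
`p * lcm(1, …, m)`. Hence passing from `lcm(1, …, m)` to `lcm(1, …, m + 1)` adds at most one prime
factor.
-/

open scoped ArithmeticFunction.Omega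

section CardFactors

open ArithmeticFunction

theorem cardFactors_add_cardFactors_div {a b : ℕ} (hb : b ≠ 0) (h : a ∣ b) :
    Ω a + Ω (b / a) = Ω b := by
  obtain ⟨c, rfl⟩ := h
  obtain ⟨ha, hc⟩ := mul_ne_zero_iff.mp hb
  rw [Nat.mul_div_cancel_left c (Nat.pos_of_ne_zero ha), cardFactors_mul ha hc]

theorem cardFactors_le_of_dvd {a b : ℕ} (hb : b ≠ 0) (h : a ∣ b) : Ω a ≤ Ω b :=
  Nat.le.intro (cardFactors_add_cardFactors_div hb h)

theorem cardFactors_lcm_mul_le {a d l : ℕ} (ha : a ≠ 0) (hl : l ≠ 0) (hd : d ∣ l) :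
    Ω (Nat.lcm l (a * d)) ≤ Ω l + Ω a := by
  have h_dvd : Nat.lcm l (a * d) ∣ l * a :=
    Nat.lcm_dvd (dvd_mul_right l a) (mul_comm l a ▸ mul_dvd_mul_left a hd)
  calc Ω (Nat.lcm l (a * d)) ≤ Ω (l * a) := cardFactors_le_of_dvd (mul_ne_zero hl ha) h_dvd
    _ = Ω l + Ω a := cardFactors_mul hl ha

end CardFactors

section RangeLcm

variable {a b c i : ℕ}

theorem rangeLcm_ne_zero (ha : a ≠ 0) : rangeLcm a b ≠ 0 := by
  simpa [rangeLcm, Finset.lcm_eq_zero_iff] using ha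

theorem dvd_rangeLcm_s16 (hai : a ≤ i) (hib : i ≤ b) : i ∣ rangeLcm a b :=
  Finset.dvd_lcm (f := id) (Finset.mem_Icc.mpr ⟨hai, hib⟩)

theorem rangeLcm_dvd_rangeLcm_right (h : b ≤ c) : rangeLcm a b ∣ rangeLcm a c :=
  Finset.lcm_mono (Finset.Icc_subset_Icc_right h)

theorem rangeLcm_succ_right (h : a ≤ b + 1) :
    rangeLcm a (b + 1) = Nat.lcm (rangeLcm a b) (b + 1) := by
  rw [rangeLcm, ← Finset.insert_Icc_right_eq_Icc_add_one h, Finset.lcm_insert, lcm_comm]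
  rfl

end RangeLcm

theorem cardFactors_rangeLcm_succ_le {m : ℕ} (hm : 1 ≤ m) :
    Ω (rangeLcm 1 (m + 1)) ≤ Ω (rangeLcm 1 m) + 1 := by
  obtain ⟨p, hp, d, hd⟩ := Nat.exists_prime_and_dvd (n := m + 1) (by lia)
  have hd_pos : 1 ≤ d := Nat.pos_of_ne_zero (by rintro rfl; simp at hd)
  have hd_le : d ≤ m := by nlinarith [hp.two_le]
  calc Ω (rangeLcm 1 (m + 1)) = Ω (Nat.lcm (rangeLcm 1 m) (p * d)) := by
        rw [rangeLcm_succ_right (by lia), hd]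
    _ ≤ Ω (rangeLcm 1 m) + Ω p :=
        cardFactors_lcm_mul_le hp.ne_zero (rangeLcm_ne_zero one_ne_zero)
          (dvd_rangeLcm_s16 hd_pos hd_le)
    _ = Ω (rangeLcm 1 m) + 1 := by rw [ArithmeticFunction.cardFactors_apply_prime hp]

theorem cardFactors_rangeLcm_add_le {n : ℕ} (hn : 1 ≤ n) (k : ℕ) :
    Ω (rangeLcm 1 (n + k)) ≤ Ω (rangeLcm 1 n) + k := by
  induction k with
  | zero => rfl
  | succ k ih =>
    exact (cardFactors_rangeLcm_succ_le (Nat.le_add_right_of_le hn)).trans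
      (Nat.add_le_add_right ih 1)

/-- For `n ≥ 1` and `k ≥ 0`, the integer `lcm(1, …, n+k) / lcm(1, …, n)`
has at most `k` prime factors counted with multiplicity. -/
theorem cardFactors_rangeLcm_div_le (n k : ℕ) (hn : 1 ≤ n) :
    (rangeLcm 1 (n + k) / rangeLcm 1 n).primeFactorsList.length ≤ k := by
  rw [← ArithmeticFunction.cardFactors_apply]
  have h_add :
      Ω (rangeLcm 1 n) + Ω (rangeLcm 1 (n + k) / rangeLcm 1 n) = Ω (rangeLcm 1 (n + k)) :=
    cardFactors_add_cardFactors_div (rangeLcm_ne_zero one_ne_zero)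
      (rangeLcm_dvd_rangeLcm_right (Nat.le_add_right n k))
  have h_le : Ω (rangeLcm 1 (n + k)) ≤ Ω (rangeLcm 1 n) + k := cardFactors_rangeLcm_add_le hn k
  lia
end
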